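/- Let A be a cBCK-algebra and M a prime ideal of A. The singleton {M} is a closed subset of X(A) if and only if M is a maximal ideal of A (a proper ideal not properly contained in any proper ideal). -/

import Mathlib

/-!
A closed set is `{P | I ⊆ P}` for an ideal `I`, so `{M}` is closed exactly when `M` is the only
prime ideal containing `M`. If `M` is maximal this is immediate. For the converse it suffices that
every proper ideal `I` lies in a prime ideal (`exists_prime`): applied to an ideal properly above
`M`, this would give a second prime above `M`.

To find the prime, choose `x ∉ I` and, by Zorn, an ideal `P ⊇ I` maximal among those omitting `x`.
Primality uses the colon ideals `(P : a) = {z | z ∧ a ∈ P}` (`isIdeal_colon`), which contain `P`.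
If `a ∧ b ∈ P` with `a, b ∉ P`, then `b ∈ (P : a)`, so maximality gives `x ∈ (P : a)`; hence
`a ∈ (P : x)`, so maximality gives `x ∈ (P : x)`, that is `x = x ∧ x ∈ P`, a contradiction.
-/

universe u v

/-- A commutative BCK-algebra structure on a type `A`. -/
structure CBCK (A : Type u) where
  op : A → A → A
  zero : A
  op_op_comm : ∀ x y z : A, op (op x y) z = op (op x z) y
  op_comm : ∀ x y : A, op x (op x y) = op y (op y x)
  op_self : ∀ x : A, op x x = zero
  op_zero : ∀ x : A, op x zero = x

namespace CBCK

variable {A : Type u}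

/-- The meet `x ∧ y := y·(y·x)`. -/
def meet (C : CBCK A) (x y : A) : A := C.op y (C.op y x)

/-- A subset `I` is an ideal: `0 ∈ I` and `x·y ∈ I`, `y ∈ I` imply `x ∈ I`. -/
def IsIdeal (C : CBCK A) (I : Set A) : Prop :=
  C.zero ∈ I ∧ ∀ x y : A, C.op x y ∈ I → y ∈ I → x ∈ I

/-- A prime ideal: a proper ideal such that `x ∧ y ∈ P` implies `x ∈ P` or `y ∈ P`. -/
def IsPrimeIdeal (C : CBCK A) (P : Set A) : Prop :=
  C.IsIdeal P ∧ P ≠ Set.univ ∧ ∀ x y : A, C.meet x y ∈ P → x ∈ P ∨ y ∈ P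

/-- The ideal generated by a subset `S`: the smallest ideal containing `S`. -/
def idealGen (C : CBCK A) (S : Set A) : Set A :=
  ⋂₀ {I : Set A | C.IsIdeal I ∧ S ⊆ I}

/-- The spectrum: the set of prime ideals. -/
def Spec (C : CBCK A) : Type u := {P : Set A // C.IsPrimeIdeal P}

/-- `σ(I) = {P ∈ X(A) : I ⊄ P}`. -/
def sigmaSet (C : CBCK A) (I : Set A) : Set C.Spec := {P : C.Spec | ¬ I ⊆ P.1}

/-- `σ(a) = σ((a])`. -/
def sigmaPt (C : CBCK A) (a : A) : Set C.Spec := C.sigmaSet (C.idealGen {a})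

/-- Iterated subtraction: `x·y⁰ = x`, `x·yⁿ⁺¹ = (x·yⁿ)·y`. -/
def opPow (C : CBCK A) (x y : A) : ℕ → A
  | 0 => x
  | n + 1 => C.op (C.opPow x y n) y

/-- A subset `B` is a subalgebra: contains `0` and is closed under the operation. -/
def IsSubalg (C : CBCK A) (B : Set A) : Prop :=
  C.zero ∈ B ∧ ∀ x ∈ B, ∀ y ∈ B, C.op x y ∈ B

/-- The subalgebra generated by a subset. -/
def subalgGen (C : CBCK A) (S : Set A) : Set A :=
  ⋂₀ {B : Set A | C.IsSubalg B ∧ S ⊆ B}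

/-- `I` is an ideal of the subalgebra `B`. -/
def IsIdealIn (C : CBCK A) (B I : Set A) : Prop :=
  I ⊆ B ∧ C.zero ∈ I ∧ ∀ x ∈ B, ∀ y ∈ B, C.op x y ∈ I → y ∈ I → x ∈ I

/-- `P` is a prime ideal of the subalgebra `B`. -/
def IsPrimeIdealIn (C : CBCK A) (B P : Set A) : Prop :=
  C.IsIdealIn B P ∧ P ≠ B ∧ ∀ x ∈ B, ∀ y ∈ B, C.meet x y ∈ P → x ∈ P ∨ y ∈ P

/-- The spectrum of a subalgebra `B`: its set of prime ideals. -/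
def SpecIn (C : CBCK A) (B : Set A) : Type u := {P : Set A // C.IsPrimeIdealIn B P}

/-- The annihilator `S* = {a : a ∧ s = 0 for all s ∈ S}`. -/
def ann (C : CBCK A) (S : Set A) : Set A := {a : A | ∀ s ∈ S, C.meet a s = C.zero}

/-- The annihilator of `S` computed inside the subalgebra `B`. -/
def annIn (C : CBCK A) (B S : Set A) : Set A :=
  {a : A | a ∈ B ∧ ∀ s ∈ S, C.meet a s = C.zero}

/-- `A` is involutory: every ideal `I` satisfies `I = I**`. -/
def Involutory (C : CBCK A) : Prop := ∀ I : Set A, C.IsIdeal I → C.ann (C.ann I) = I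

/-- The subalgebra `B` is involutory. -/
def InvolutoryIn (C : CBCK A) (B : Set A) : Prop :=
  ∀ I : Set A, C.IsIdealIn B I → C.annIn B (C.annIn B I) = I

/-- The data of `A` being the cBCK-union of the family of subalgebras `Aset`:
the subalgebras cover `A`, pairwise intersect in `{0}`, and the operation between
distinct members is `x·y = x`. -/
def IsUnionFamily (C : CBCK A) {Λ : Type v} (Aset : Λ → Set A) : Prop :=
  (∀ x : A, ∃ l : Λ, x ∈ Aset l) ∧
  (∀ l : Λ, C.IsSubalg (Aset l)) ∧
  (∀ l m : Λ, l ≠ m → Aset l ∩ Aset m = {C.zero}) ∧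
  (∀ l m : Λ, l ≠ m → ∀ x ∈ Aset l, ∀ y ∈ Aset m, C.op x y = x)

end CBCK

namespace CBCK

variable {A : Type u} (C : CBCK A)

theorem zero_op (x : A) : C.op C.zero x = C.zero := by
  have h : C.op C.zero (C.op C.zero x) = C.zero := by
    rw [C.op_comm, C.op_zero, C.op_self]
  calc C.op C.zero x = C.op (C.op C.zero (C.op C.zero x)) x := by rw [h]
    _ = C.zero := by rw [C.op_op_comm, C.op_self]

theorem op_op_left (x y : A) : C.op (C.op x y) x = C.zero := by
  rw [C.op_op_comm, C.op_self, C.zero_op]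

theorem op_op_op (x y : A) : C.op x (C.op x (C.op x y)) = C.op x y := by
  rw [C.op_comm x (C.op x y), C.op_op_left, C.op_zero]

theorem op_op_of_le {x y : A} (h : C.op x y = C.zero) : C.op y (C.op y x) = x := by
  rw [C.op_comm, h, C.op_zero]

theorem meet_comm (x y : A) : C.meet x y = C.meet y x := C.op_comm y x

theorem meet_le_right (x y : A) : C.op (C.meet x y) y = C.zero := C.op_op_left _ _

theorem meet_le_left (x y : A) : C.op (C.meet x y) x = C.zero := by
  rw [meet_comm, meet_le_right]

theorem meet_self (x : A) : C.meet x x = x := by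
  rw [meet, C.op_self, C.op_zero]

theorem op_mono_left {x y : A} (h : C.op x y = C.zero) (z : A) :
    C.op (C.op x z) (C.op y z) = C.zero := by
  have e : C.op x z = C.op (C.op y z) (C.op y x) := by
    rw [C.op_op_comm, C.op_op_of_le h]
  rw [e, C.op_op_left]

theorem le_trans' {x y z : A} (h : C.op x y = C.zero) (k : C.op y z = C.zero) :
    C.op x z = C.zero := by
  have := C.op_mono_left h z
  rwa [k, C.op_zero] at this

/-- Below `a`, subtracting `y ∧ a` is the same as subtracting `y`. -/
theorem op_meet_of_le {u a : A} (h : C.op u a = C.zero) (y : A) :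
    C.op u (C.meet y a) = C.op u y := by
  have hu := C.op_op_of_le h
  calc C.op u (C.op a (C.op a y))
      = C.op (C.op a (C.op a u)) (C.op a (C.op a y)) := by rw [hu]
    _ = C.op (C.op a y) (C.op a u) := by rw [C.op_op_comm, C.op_op_op]
    _ = C.op u y := by rw [C.op_op_comm, hu]

theorem le_meet {w a c : A} (ha : C.op w a = C.zero) (hc : C.op w c = C.zero) :
    C.op w (C.meet a c) = C.zero := by
  rw [C.op_meet_of_le hc, ha]

variable {C}

theorem IsIdeal.mem_of_le {I : Set A} (hI : C.IsIdeal I) {x y : A}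
    (h : C.op x y = C.zero) (hy : y ∈ I) : x ∈ I :=
  hI.2 x y (h ▸ hI.1) hy

/-- The colon ideal `(P : a)`. The key inequality is
`(x ∧ a)·(y ∧ a) ≤ (x·y) ∧ a`. -/
theorem isIdeal_colon {P : Set A} (hP : C.IsIdeal P) (a : A) :
    C.IsIdeal {x | C.meet x a ∈ P} := by
  refine ⟨hP.mem_of_le (C.meet_le_left _ _) hP.1, fun x y hxy hy => ?_⟩
  refine hP.2 _ _ (hP.mem_of_le (C.le_meet ?_ ?_) hxy) hy
  · rw [C.op_meet_of_le (C.meet_le_right x a)]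
    exact C.op_mono_left (C.meet_le_left x a) y
  · exact C.le_trans' (C.op_op_left _ _) (C.meet_le_right x a)

theorem isIdeal_sUnion_of_chain {c : Set (Set A)} (hc : IsChain (· ⊆ ·) c) (hne : c.Nonempty)
    (hI : ∀ I ∈ c, C.IsIdeal I) : C.IsIdeal (⋃₀ c) := by
  obtain ⟨I, hIc⟩ := hne
  refine ⟨⟨I, hIc, (hI I hIc).1⟩, ?_⟩
  rintro x y ⟨J, hJ, hxy⟩ ⟨K, hK, hy⟩
  rcases hc.total hJ hK with h | h
  · exact ⟨K, hK, (hI K hK).2 x y (h hxy) hy⟩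
  · exact ⟨J, hJ, (hI J hJ).2 x y hxy (h hy)⟩

theorem exists_prime {I : Set A} (hI : C.IsIdeal I) (hne : I ≠ Set.univ) :
    ∃ P, C.IsPrimeIdeal P ∧ I ⊆ P := by
  obtain ⟨x, hx⟩ := (Set.ne_univ_iff_exists_notMem I).1 hne
  obtain ⟨P, hIP, ⟨hP, hxP⟩, hmax⟩ := zorn_subset_nonempty {J : Set A | C.IsIdeal J ∧ x ∉ J}
    (fun c hcS hc hcne => ⟨⋃₀ c, ⟨isIdeal_sUnion_of_chain hc hcne fun J hJ => (hcS hJ).1,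
      fun ⟨J, hJ, hxJ⟩ => (hcS hJ).2 hxJ⟩, fun J hJ => Set.subset_sUnion_of_mem hJ⟩)
    I ⟨hI, hx⟩
  have key : ∀ a b, C.meet b a ∈ P → b ∉ P → C.meet x a ∈ P := by
    intro a b hab hb
    by_contra hxa
    exact hb (hmax (y := {z | C.meet z a ∈ P}) ⟨isIdeal_colon hP a, hxa⟩
      (fun z hz => hP.mem_of_le (C.meet_le_left z a) hz) hab)
  refine ⟨P, ⟨hP, fun h => hxP (h ▸ Set.mem_univ x), fun a b hab => ?_⟩, hIP⟩
  by_contra! h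
  have h1 : C.meet x a ∈ P := key a b (C.meet_comm a b ▸ hab) h.2
  have h2 : C.meet x x ∈ P := key x a (C.meet_comm x a ▸ h1) h.1
  exact hxP (C.meet_self x ▸ h2)

end CBCK

/-- A point `{M}` of the spectrum is closed iff `M` is a maximal
ideal (a proper ideal not properly contained in any proper ideal). -/
theorem spec_singleton_closed_iff_maximal {A : Type u} (C : CBCK A)
    [ts : TopologicalSpace C.Spec]
    (hT : ∀ s : Set C.Spec, IsOpen s ↔ ∃ I : Set A, C.IsIdeal I ∧ s = C.sigmaSet I)
    (M : C.Spec) :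
    IsClosed ({M} : Set C.Spec) ↔
      (M.1 ≠ Set.univ ∧ ∀ I : Set A, C.IsIdeal I → M.1 ⊂ I → I = Set.univ) := by
  rw [← isOpen_compl_iff, hT]
  constructor
  · rintro ⟨I, -, hc⟩
    -- Membership in `{M}` is the condition `I ⊆ P`, which passes to larger primes.
    have hmem : ∀ P : C.Spec, P = M ↔ I ⊆ P.1 := fun P => by
      have := Set.ext_iff.1 hc P
      exact not_iff_not.1 this
    refine ⟨M.2.2.1, fun J hJ hMJ => ?_⟩
    by_contra hne
    obtain ⟨P, hP, hJP⟩ := CBCK.exists_prime hJ hne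
    have hPM : (⟨P, hP⟩ : C.Spec) = M :=
      (hmem _).2 (((hmem M).1 rfl).trans (hMJ.1.trans hJP))
    exact hMJ.2 (hJP.trans (congrArg Subtype.val hPM).subset)
  · rintro ⟨-, hmax⟩
    refine ⟨M.1, M.2.1, Set.ext fun P => not_congr ?_⟩
    constructor
    · rintro rfl
      exact subset_rfl
    · intro h
      by_contra hPM
      have hss : M.1 ⊂ P.1 := h.ssubset_of_ne fun e => hPM (Subtype.ext e.symm)
      exact P.2.2.1 (hmax P.1 P.2.1 hss)
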